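/- In any nondegenerate triangle, the distance from the incenter X1 to the centroid X2 satisfies dist(X1, X2) ≥ (2√2/3)·dist(X1, X6), where X6 is the symmedian point. -/

import Mathlib

/-- The point with normalized barycentric coordinates `(x : y : z)`
with respect to the triangle `A B C`. -/
noncomputable def bary (A B C : EuclideanSpace ℝ (Fin 2)) (x y z : ℝ) :
    EuclideanSpace ℝ (Fin 2) :=
  (x + y + z)⁻¹ • (x • A + y • B + z • C)

/-- The triangle center with barycentric coordinates
`(f a b c : f b c a : f c a b)` where `a, b, c` are the side lengths. -/
noncomputable def tcenter (f : ℝ → ℝ → ℝ → ℝ) (A B C : EuclideanSpace ℝ (Fin 2)) :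
    EuclideanSpace ℝ (Fin 2) :=
  bary A B C (f (dist B C) (dist C A) (dist A B))
    (f (dist C A) (dist A B) (dist B C))
    (f (dist A B) (dist B C) (dist C A))

/-!
Write the side lengths as `a = y + z`, `b = z + x`, `c = x + y` with `x, y, z ≥ 0`, and put
`s = x + y + z`, `M = x² + y² + z² + xy + yz + zx`. Lagrange's formula for the distance of two
barycentric points gives

* `dist X₁ X₂ ^ 2 = ∑ x (x - y) (x - z) / (9 s)`, the numerator being Schur's expression;
* `dist X₁ X₆ ^ 2 = (x + y) (y + z) (z + x) ∑ x y (x - y)² / (4 s M²)`.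

The resulting polynomial inequality is a sum of squares `∑ S_z (x - y)²` with symmetric
coefficients, to which the classical SOS criterion for `x ≥ y ≥ z` applies.
-/

section SumOfSquares

variable {x y z : ℝ}

/-- Since `(x - z) / (y - z) ≥ x / y`, the coefficient `Sy` can compensate for a negative `Sx`. -/
theorem sos_nonneg_of_ordered {Sx Sy Sz : ℝ} (hz : 0 ≤ z) (hzy : z ≤ y) (hyx : y ≤ x)
    (hSy : 0 ≤ Sy) (hSz : 0 ≤ Sz) (hS : 0 ≤ x ^ 2 * Sy + y ^ 2 * Sx) :
    0 ≤ Sx * (y - z) ^ 2 + Sy * (x - z) ^ 2 + Sz * (x - y) ^ 2 := by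
  have hSz' : 0 ≤ Sz * (x - y) ^ 2 := by positivity
  suffices 0 ≤ Sx * (y - z) ^ 2 + Sy * (x - z) ^ 2 by linarith
  rcases (hz.trans hzy).eq_or_lt with hy | hy
  · obtain rfl : z = y := by linarith
    rw [sub_self, zero_pow two_ne_zero, mul_zero, zero_add]
    positivity
  have hratio : x * (y - z) ≤ y * (x - z) := by nlinarith
  have hratio_sq : (x * (y - z)) ^ 2 ≤ (y * (x - z)) ^ 2 :=
    pow_le_pow_left₀ (mul_nonneg (by linarith) (by linarith)) hratio 2
  refine nonneg_of_mul_nonneg_right ?_ (pow_pos hy 2)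
  calc 0 ≤ (y - z) ^ 2 * (x ^ 2 * Sy + y ^ 2 * Sx) := by positivity
    _ = y ^ 2 * (Sx * (y - z) ^ 2) + Sy * (x * (y - z)) ^ 2 := by ring
    _ ≤ y ^ 2 * (Sx * (y - z) ^ 2) + Sy * (y * (x - z)) ^ 2 := by gcongr
    _ = y ^ 2 * (Sx * (y - z) ^ 2 + Sy * (x - z) ^ 2) := by ring

/-- The symmetric quartic `s⁴ - 2 s² v - v²`, where `s = x + y + z` and `v = xy + yz + zx`. It is
the factor of Schur's expression in the SOS form of the inequality of tangent lengths. -/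
def schurFactor (x y z : ℝ) : ℝ :=
  (x + y + z) ^ 4 - 2 * (x + y + z) ^ 2 * (x * y + y * z + z * x) - (x * y + y * z + z * x) ^ 2

/-- The coefficient of `(x - y)²` in the SOS form of the inequality of tangent lengths, symmetric in
`x` and `y`; the other two arise by permuting the variables. -/
def sosCoeff (x y z : ℝ) : ℝ :=
  (x + y - z) * schurFactor x y z - 4 * (x * y * z) * (x * y + y * z + z * x)
    - 2 * (x * y * z) * z ^ 2

theorem le_schurFactor (hx : 0 ≤ x) (hy : 0 ≤ y) (hz : 0 ≤ z) :
    4 * (x * y) * (x * y + y * z + z * x) + 2 * (x * y) ^ 2 ≤ schurFactor x y z := by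
  -- For fixed `x + y` the difference decreases in `x * y`, and at `x = y` it is a square.
  have hdecomp : schurFactor x y z
        - (4 * (x * y) * (x * y + y * z + z * x) + 2 * (x * y) ^ 2) =
      (z ^ 2 + (x + y) * z - (x + y) ^ 2 / 4) ^ 2
        + (x - y) ^ 2 / 4 * (2 * (x + y + z) ^ 2 + 7 * ((x + y) ^ 2 / 4 + x * y)
          + 6 * z * (x + y)) := by
    unfold schurFactor; ring
  rw [← sub_nonneg, hdecomp]
  positivity

theorem schurFactor_nonneg (hx : 0 ≤ x) (hy : 0 ≤ y) (hz : 0 ≤ z) : 0 ≤ schurFactor x y z :=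
  le_trans (by positivity) (le_schurFactor hx hy hz)

theorem schurFactor_rotate : schurFactor y z x = schurFactor x y z := by
  unfold schurFactor; ring

theorem sosCoeff_nonneg (hx : 0 ≤ x) (hy : 0 ≤ y) (hz : 0 ≤ z) (hzx : z ≤ x) :
    0 ≤ sosCoeff x y z := by
  have hK := schurFactor_nonneg hx hy hz
  have hle := le_schurFactor hz hx hy
  rw [← schurFactor_rotate] at hle
  calc 0 ≤ y * (schurFactor x y z
        - (4 * (z * x) * (z * x + x * y + y * z) + 2 * (z * x) ^ 2)) :=
        mul_nonneg hy (sub_nonneg.2 hle)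
    _ = y * schurFactor x y z - 4 * (x * y * z) * (x * y + y * z + z * x)
        - 2 * (x * y * z) * (z * x) := by ring
    _ ≤ sosCoeff x y z := by
      have hcoeff : y ≤ x + y - z := by linarith
      have hsq : z ^ 2 ≤ z * x := by nlinarith
      unfold sosCoeff
      gcongr

theorem sq_mul_sosCoeff_add_nonneg (hx : 0 ≤ x) (hy : 0 ≤ y) (hz : 0 ≤ z) :
    0 ≤ x ^ 2 * sosCoeff x z y + y ^ 2 * sosCoeff y z x := by
  have hK := schurFactor_nonneg hx hy hz
  have hle := sub_nonneg.2 (le_schurFactor hx hy hz)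
  have hdecomp : x ^ 2 * sosCoeff x z y + y ^ 2 * sosCoeff y z x =
      schurFactor x y z * (x - y) ^ 2 * (x + y)
        + z * ((x ^ 2 + y ^ 2) * (schurFactor x y z
            - (4 * (x * y) * (x * y + y * z + z * x) + 2 * (x * y) ^ 2))
          + 2 * (x * y) ^ 2 * (x - y) ^ 2) := by
    unfold sosCoeff schurFactor; ring
  rw [hdecomp]
  positivity

/-- Schur's expression of degree three, up to a constant the numerator of `dist X₁ X₂ ^ 2`. -/
def schurSum (x y z : ℝ) : ℝ :=
  x * (x - y) * (x - z) + y * (y - z) * (y - x) + z * (z - x) * (z - y)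

theorem sum_sosCoeff_mul_sq :
    sosCoeff y z x * (y - z) ^ 2 + sosCoeff x z y * (x - z) ^ 2 + sosCoeff x y z * (x - y) ^ 2 =
      2 * ((x ^ 2 + y ^ 2 + z ^ 2 + x * y + y * z + z * x) ^ 2 * schurSum x y z
        - 2 * ((x + y) * (y + z) * (z + x)
          * (x * y * (x - y) ^ 2 + y * z * (y - z) ^ 2 + z * x * (z - x) ^ 2))) := by
  unfold sosCoeff schurFactor schurSum; ring

theorem tangent_length_inequality (hx : 0 ≤ x) (hy : 0 ≤ y) (hz : 0 ≤ z) :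
    2 * ((x + y) * (y + z) * (z + x)
        * (x * y * (x - y) ^ 2 + y * z * (y - z) ^ 2 + z * x * (z - x) ^ 2)) ≤
      (x ^ 2 + y ^ 2 + z ^ 2 + x * y + y * z + z * x) ^ 2 * schurSum x y z := by
  wlog hzx : z ≤ x generalizing x z
  · unfold schurSum at this ⊢
    linarith [this hz hx (le_of_not_ge hzx)]
  wlog hzy : z ≤ y generalizing y z
  · unfold schurSum at this ⊢
    linarith [this hz hy ((le_of_not_ge hzy).trans hzx) (le_of_not_ge hzy)]
  wlog hyx : y ≤ x generalizing x y
  · unfold schurSum at this ⊢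
    linarith [this hy hx hzy hzx (le_of_not_ge hyx)]
  have hsos := sos_nonneg_of_ordered hz hzy hyx (sosCoeff_nonneg hx hz hy hyx)
    (sosCoeff_nonneg hx hy hz hzx) (sq_mul_sosCoeff_add_nonneg hx hy hz)
  rw [sum_sosCoeff_mul_sq] at hsos
  linarith

theorem sum_sq_add_sum_mul_pos (hs : x + y + z ≠ 0) :
    0 < x ^ 2 + y ^ 2 + z ^ 2 + x * y + y * z + z * x := by
  linarith [sq_pos_of_ne_zero hs, sq_nonneg x, sq_nonneg y, sq_nonneg z]

end SumOfSquares

section Distances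

variable {V : Type*} [NormedAddCommGroup V] [InnerProductSpace ℝ V]

theorem dist_centerMass_sq {ι : Type*} {s : Finset ι} {w₁ w₂ : ι → ℝ} (p : ι → V)
    (h₁ : ∑ i ∈ s, w₁ i ≠ 0) (h₂ : ∑ i ∈ s, w₂ i ≠ 0) :
    dist (s.centerMass w₁ p) (s.centerMass w₂ p) ^ 2 =
      (-∑ i ∈ s, ∑ j ∈ s, (w₁ i / ∑ k ∈ s, w₁ k - w₂ i / ∑ k ∈ s, w₂ k)
        * (w₁ j / ∑ k ∈ s, w₁ k - w₂ j / ∑ k ∈ s, w₂ k) * dist (p i) (p j) ^ 2) / 2 := by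
  have hnormalize {w : ι → ℝ} (hw : ∑ i ∈ s, w i ≠ 0) :
      ∑ i ∈ s, ((∑ k ∈ s, w k)⁻¹ • w) i = 1 := by
    simp only [Pi.smul_apply, smul_eq_mul, ← Finset.mul_sum, inv_mul_cancel₀ hw]
  have hdist := EuclideanGeometry.dist_affineCombination p (hnormalize h₁) (hnormalize h₂)
  simp only [affineCombination_eq_centerMass (hnormalize h₁),
    affineCombination_eq_centerMass (hnormalize h₂),
    Finset.centerMass_smul_left _ _ (inv_ne_zero h₁),
    Finset.centerMass_smul_left _ _ (inv_ne_zero h₂),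
    Pi.sub_apply, Pi.smul_apply, smul_eq_mul, inv_mul_eq_div, ← sq] at hdist
  exact hdist

/-- The triangle center with barycentric coordinates `(f a b c : f b c a : f c a b)`, for a triangle
in an arbitrary real inner product space; `Finset.centerMass` normalizes the weights. -/
noncomputable def triangleCenter (f : ℝ → ℝ → ℝ → ℝ) (A B C : V) : V :=
  Finset.univ.centerMass
    ![f (dist B C) (dist C A) (dist A B), f (dist C A) (dist A B) (dist B C),
      f (dist A B) (dist B C) (dist C A)] ![A, B, C]

theorem tcenter_eq_triangleCenter (f : ℝ → ℝ → ℝ → ℝ) (A B C : EuclideanSpace ℝ (Fin 2)) :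
    tcenter f A B C = triangleCenter f A B C := by
  simp [tcenter, bary, triangleCenter, Finset.centerMass, Fin.sum_univ_three]

theorem dist_centerMass_three_sq (A B C : V) {u₁ u₂ u₃ v₁ v₂ v₃ : ℝ} (hu : u₁ + u₂ + u₃ ≠ 0)
    (hv : v₁ + v₂ + v₃ ≠ 0) :
    dist (Finset.univ.centerMass ![u₁, u₂, u₃] ![A, B, C])
        (Finset.univ.centerMass ![v₁, v₂, v₃] ![A, B, C]) ^ 2 =
      -(dist B C ^ 2 * (u₂ / (u₁ + u₂ + u₃) - v₂ / (v₁ + v₂ + v₃))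
          * (u₃ / (u₁ + u₂ + u₃) - v₃ / (v₁ + v₂ + v₃))
        + dist C A ^ 2 * (u₃ / (u₁ + u₂ + u₃) - v₃ / (v₁ + v₂ + v₃))
          * (u₁ / (u₁ + u₂ + u₃) - v₁ / (v₁ + v₂ + v₃))
        + dist A B ^ 2 * (u₁ / (u₁ + u₂ + u₃) - v₁ / (v₁ + v₂ + v₃))
          * (u₂ / (u₁ + u₂ + u₃) - v₂ / (v₁ + v₂ + v₃))) := by
  have hdist := dist_centerMass_sq (s := Finset.univ) (w₁ := ![u₁, u₂, u₃])
    (w₂ := ![v₁, v₂, v₃]) ![A, B, C] (by simpa [Fin.sum_univ_three] using hu)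
    (by simpa [Fin.sum_univ_three] using hv)
  rw [hdist]
  simp only [Fin.sum_univ_three, Matrix.cons_val, dist_self, dist_comm B A, dist_comm C B,
    dist_comm A C]
  ring

variable {A B C : V} {x y z : ℝ}

theorem dist_incenter_centroid_sq (ha : dist B C = y + z) (hb : dist C A = z + x)
    (hc : dist A B = x + y) (hs : x + y + z ≠ 0) :
    dist (triangleCenter (fun a _ _ => a) A B C) (triangleCenter (fun _ _ _ => 1) A B C) ^ 2 =
      schurSum x y z / (9 * (x + y + z)) := by
  have hperimeter : y + z + (z + x) + (x + y) = 2 * (x + y + z) := by ring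
  have hcoord (w : ℝ) : w / (2 * (x + y + z)) - 1 / (1 + 1 + 1) =
      (3 * w - 2 * (x + y + z)) / (6 * (x + y + z)) := by
    field_simp
    ring
  simp only [triangleCenter, ha, hb, hc]
  rw [dist_centerMass_three_sq A B C (by simpa [hperimeter] using hs) (by norm_num), ha, hb, hc,
    hperimeter, schurSum]
  simp only [hcoord]
  field_simp
  ring

theorem dist_incenter_symmedian_sq (ha : dist B C = y + z) (hb : dist C A = z + x)
    (hc : dist A B = x + y) (hs : x + y + z ≠ 0) :
    dist (triangleCenter (fun a _ _ => a) A B C) (triangleCenter (fun a _ _ => a ^ 2) A B C) ^ 2 =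
      (x + y) * (y + z) * (z + x)
          * (x * y * (x - y) ^ 2 + y * z * (y - z) ^ 2 + z * x * (z - x) ^ 2)
        / (4 * (x + y + z) * (x ^ 2 + y ^ 2 + z ^ 2 + x * y + y * z + z * x) ^ 2) := by
  have hperimeter : y + z + (z + x) + (x + y) = 2 * (x + y + z) := by ring
  have hsumsq : (y + z) ^ 2 + (z + x) ^ 2 + (x + y) ^ 2 =
      2 * (x ^ 2 + y ^ 2 + z ^ 2 + x * y + y * z + z * x) := by ring
  have hM := (sum_sq_add_sum_mul_pos hs).ne'
  have hcoord (w : ℝ) : w / (2 * (x + y + z))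
        - w ^ 2 / (2 * (x ^ 2 + y ^ 2 + z ^ 2 + x * y + y * z + z * x)) =
      w * (x ^ 2 + y ^ 2 + z ^ 2 + x * y + y * z + z * x - w * (x + y + z))
        / (2 * ((x + y + z) * (x ^ 2 + y ^ 2 + z ^ 2 + x * y + y * z + z * x))) := by
    rw [div_sub_div _ _ (by simpa using hs) (by simpa using hM), div_eq_div_iff
      (by simp [hs, hM]) (by simp [hs, hM])]
    ring
  simp only [triangleCenter, ha, hb, hc]
  rw [dist_centerMass_three_sq A B C (by simpa [hperimeter] using hs) (by simpa [hsumsq] using hM),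
    ha, hb, hc, hperimeter, hsumsq]
  simp only [hcoord]
  generalize hMdef : x ^ 2 + y ^ 2 + z ^ 2 + x * y + y * z + z * x = M at *
  field_simp
  rw [← hMdef]
  ring

end Distances

theorem exists_tangent_lengths {P : Type*} [PseudoMetricSpace P] (A B C : P) :
    ∃ x y z : ℝ, 0 ≤ x ∧ 0 ≤ y ∧ 0 ≤ z ∧
      dist B C = y + z ∧ dist C A = z + x ∧ dist A B = x + y := by
  have ha := dist_triangle_left B C A
  have hb := dist_triangle_left C A B
  have hc := dist_triangle_left A B C
  rw [dist_comm A C] at ha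
  rw [dist_comm B A] at hb
  rw [dist_comm C B] at hc
  refine ⟨(dist C A + dist A B - dist B C) / 2, (dist A B + dist B C - dist C A) / 2,
    (dist B C + dist C A - dist A B) / 2, ?_, ?_, ?_, ?_, ?_, ?_⟩ <;> linarith

theorem stmt_7_general {V : Type*} [NormedAddCommGroup V] [InnerProductSpace ℝ V] (A B C : V)
    (h : A ≠ B ∨ B ≠ C) :
    2 * Real.sqrt 2 / 3 * dist (triangleCenter (fun a _ _ => a) A B C)
        (triangleCenter (fun a _ _ => a ^ 2) A B C) ≤
      dist (triangleCenter (fun a _ _ => a) A B C) (triangleCenter (fun _ _ _ => 1) A B C) := by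
  obtain ⟨x, y, z, hx, hy, hz, ha, hb, hc⟩ := exists_tangent_lengths A B C
  have hs : 0 < x + y + z := by
    rcases h with h | h <;> linarith [dist_pos.2 h]
  have hM := sum_sq_add_sum_mul_pos hs.ne'
  refine (sq_le_sq₀ (by positivity) dist_nonneg).1 ?_
  rw [mul_pow, div_pow, mul_pow, Real.sq_sqrt zero_le_two,
    dist_incenter_symmedian_sq ha hb hc hs.ne', dist_incenter_centroid_sq ha hb hc hs.ne',
    mul_div_assoc', div_le_div_iff₀ (by positivity) (by positivity)]
  linear_combination (4 * (x + y + z)) * tangent_length_inequality hx hy hz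

theorem stmt_7 (A B C : EuclideanSpace ℝ (Fin 2))
    (h : AffineIndependent ℝ ![A, B, C]) :
    dist (tcenter (fun a b c => a) A B C) (tcenter (fun a b c => (1:Real)) A B C) ≥ (2 * Real.sqrt 2 / 3) * dist (tcenter (fun a b c => a) A B C) (tcenter (fun a b c => a^2) A B C) := by
  simpa only [tcenter_eq_triangleCenter] using
    stmt_7_general A B C (.inl (h.injective.ne zero_ne_one))
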